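/- Let f ∈ Hol(α) be a bounded α-Hölder potential with conformal measure ν, eigenvalue λ and eigenfunction h, and define the operators Q(φ) = L_f(hφ)/(λh) and Π(φ) = ∫_X φ·h dν (a constant function). Then Q and Π map Hol(α) boundedly into itself, Π∘Q = Q∘Π = Π, Q and Π act as the identity on constant functions, and there exists C > 0 and s ∈ (0,1) (with s as in the exponential decay theorem) such that ‖(Q − Π)^n(φ)‖_α ≤ C·s^n·‖φ‖_α for every φ ∈ Hol(α) and every n ∈ ℕ. -/

import Mathlib

open MeasureTheory Filter Topology BoundedContinuousFunction

noncomputable section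

variable {E : Type*} [MetricSpace E]

/-- The metric on the sequence space `X = E^ℕ`:
`d_X(x,y) = ∑_{n=1}^∞ 2⁻ⁿ · min(d_E(x_n,y_n), 1)`. -/
def dX (x y : ℕ → E) : ℝ :=
  ∑' n : ℕ, ((1 : ℝ) / 2) ^ (n + 1) * min (dist (x n) (y n)) 1

/-- The left shift `σ(x₁,x₂,x₃,…) = (x₂,x₃,…)`. -/
def shift (x : ℕ → E) : ℕ → E := fun n => x (n + 1)

theorem continuous_shift : Continuous (shift (E := E)) :=
  continuous_pi fun n => continuous_apply (n + 1)

/-- Prepending one symbol: `ax = (a, x₁, x₂, …)`. -/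
def cons (a : E) (x : ℕ → E) : ℕ → E := fun n => Nat.casesOn n a x

/-- Prepending a finite word `a = (a₁,…,a_n)`. -/
def prepend {n : ℕ} (a : Fin n → E) (x : ℕ → E) : ℕ → E :=
  fun k => if h : k < n then a ⟨k, h⟩ else x (k - n)

/-- Birkhoff sums `f_n = ∑_{k=0}^{n-1} f ∘ σᵏ`. -/
def birkhoff (f : (ℕ → E) → ℝ) (n : ℕ) (x : ℕ → E) : ℝ :=
  ∑ k ∈ Finset.range n, f (shift^[k] x)

/-- Boundedness of a real-valued function on `X`. -/
def Bdd (g : (ℕ → E) → ℝ) : Prop := ∃ M : ℝ, ∀ x, |g x| ≤ M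

/-- `g` is `α`-Hölder with constant `C` (w.r.t. the metric `dX`). -/
def HolderConst (α C : ℝ) (g : (ℕ → E) → ℝ) : Prop :=
  ∀ x y, |g x - g y| ≤ C * dX x y ^ α

/-- `g ∈ Hol(α)`: bounded, continuous and `α`-Hölder. -/
def MemHol (α : ℝ) (g : (ℕ → E) → ℝ) : Prop :=
  Continuous g ∧ Bdd g ∧ ∃ C : ℝ, HolderConst α C g

/-- `g ∈ C_b(X,ℝ)`: bounded and continuous. -/
def MemCb (g : (ℕ → E) → ℝ) : Prop := Continuous g ∧ Bdd g

/-- The Hölder seminorm `D_α(g) = sup_{x ≠ y} |g x - g y| / d_X(x,y)^α`. -/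
def Dalpha (α : ℝ) (g : (ℕ → E) → ℝ) : ℝ :=
  sSup {r : ℝ | ∃ x y : ℕ → E, x ≠ y ∧ r = |g x - g y| / dX x y ^ α}

/-- The supremum norm `‖g‖_∞`. -/
def supNorm (g : (ℕ → E) → ℝ) : ℝ := ⨆ x : ℕ → E, |g x|

/-- The Hölder norm `‖g‖_α = ‖g‖_∞ + D_α(g)`. -/
def alphaNorm (α : ℝ) (g : (ℕ → E) → ℝ) : ℝ := supNorm g + Dalpha α g

variable [MeasurableSpace E] [BorelSpace E]

/-- The Ruelle transfer operator `L_f φ(x) = ∫_E e^{f(ax)} φ(ax) dp(a)`. -/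
def ruelle (p : Measure E) (f φ : (ℕ → E) → ℝ) : (ℕ → E) → ℝ :=
  fun x => ∫ a, Real.exp (f (cons a x)) * φ (cons a x) ∂p

/-- The normalized operators `P^m_n(φ) = L_f^m(φ · L_f^n 1) / L_f^{m+n} 1`. -/
def Pmn (p : Measure E) (f : (ℕ → E) → ℝ) (m n : ℕ) (φ : (ℕ → E) → ℝ) : (ℕ → E) → ℝ :=
  fun x => (ruelle p f)^[m] (fun y => φ y * (ruelle p f)^[n] (fun _ => 1) y) x /
    (ruelle p f)^[m + n] (fun _ => 1) x

/-- The equivalent bounded metric `d̄(x,y) = min{1, 4 C_f d_X(x,y)^α}`. -/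
def dbar (Cf α : ℝ) (x y : ℕ → E) : ℝ := min 1 (4 * Cf * dX x y ^ α)

/-- The Wasserstein distance associated to `d̄`, via Kantorovich duality. -/
def wass (Cf α : ℝ) (μ₁ μ₂ : Measure (ℕ → E)) : ℝ :=
  sSup {r : ℝ | ∃ g : (ℕ → E) → ℝ,
    (∀ x y, |g x - g y| ≤ dbar Cf α x y) ∧ r = (∫ x, g x ∂μ₁) - ∫ x, g x ∂μ₂}

/-- The normalized transfer operator `Q(φ) = L_f(hφ)/(λh)`. -/
def Qop (p : Measure E) (f h : (ℕ → E) → ℝ) (lam : ℝ) (φ : (ℕ → E) → ℝ) :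
    (ℕ → E) → ℝ :=
  fun x => ruelle p f (fun y => h y * φ y) x / (lam * h x)

/-- The projection `Π(φ) = ∫ φ h dν` (as a constant function). -/
def Piop (ν : Measure (ℕ → E)) (h : (ℕ → E) → ℝ) (φ : (ℕ → E) → ℝ) : (ℕ → E) → ℝ :=
  fun _ => ∫ y, φ y * h y ∂ν

/-- The operator `Q − Π`. -/
def QminusPi (p : Measure E) (f h : (ℕ → E) → ℝ) (lam : ℝ) (ν : Measure (ℕ → E)) :
    ((ℕ → E) → ℝ) → (ℕ → E) → ℝ :=
  fun φ x => Qop p f h lam φ x - Piop ν h φ x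

/-!
Replacing `f` by `g = f + log h - log (h ∘ σ) - log λ` turns `Q` into the Ruelle operator `L_g`,
which is Markov (`L_g 1 = 1`), and `Π` into integration against the `L_g`-invariant probability
measure `μ = h ν`. Write `t = d_X(x,y)^α`, `θ = 2^{-α}` and let `A` be the Hölder constant of `g`.
Prepending a common symbol multiplies `t` by `θ`, and the weights `e^{g(ax)}`, `e^{g(ay)}` overlap
in a proportion at least `e^{-Aθt}`. Coupling them along this overlap shows that `L_g` sends
functions that are Lipschitz for the bounded distance `1 - e^{-Bt}` to functions that are Lipschitz,
with the same constant, for `1 - e^{-θ(A+B)t}`. For `B` large, `θ(A+B) < B`, and passing back to the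
exponent `B` gains a factor `s < 1`; so `L_g` contracts the seminorm attached to `B` by `s` at every
single step. This seminorm is equivalent to the Hölder seminorm, and on functions of `μ`-mean zero,
such as those in the range of `L_g - μ`, it dominates the supremum norm.
-/

/-! ### Real inequalities -/

theorem one_sub_exp_neg_pos {B : ℝ} (hB : 0 < B) : 0 < 1 - Real.exp (-B) :=
  sub_pos.2 (Real.exp_lt_one_iff.2 (neg_lt_zero.2 hB))

theorem one_sub_exp_neg_le_one (B : ℝ) : 1 - Real.exp (-B) ≤ 1 :=
  sub_le_self 1 (Real.exp_nonneg _)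

theorem mul_one_sub_exp_neg_le (B : ℝ) {t : ℝ} (ht0 : 0 ≤ t) (ht1 : t ≤ 1) :
    t * (1 - Real.exp (-B)) ≤ 1 - Real.exp (-(B * t)) := by
  have hconv := convexOn_exp.2 (Set.mem_univ 0) (Set.mem_univ (-B)) (sub_nonneg.2 ht1) ht0 (by ring)
  simp only [smul_eq_mul, mul_zero, zero_add, Real.exp_zero, mul_one] at hconv
  rw [show t * -B = -(B * t) by ring] at hconv
  linarith

-- `e^{-bt} = (e^{-Bt})^{b/B}` is a concave function of `e^{-Bt}`.
theorem one_sub_exp_neg_mul_le {b B t : ℝ} (hb : 0 ≤ b) (hB : 0 < B) (hbB : b ≤ B) (ht0 : 0 ≤ t)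
    (ht1 : t ≤ 1) :
    1 - Real.exp (-(b * t)) ≤
      (1 - Real.exp (-b)) / (1 - Real.exp (-B)) * (1 - Real.exp (-(B * t))) := by
  have hd := one_sub_exp_neg_pos hB
  set w := (1 - Real.exp (-(B * t))) / (1 - Real.exp (-B)) with hw
  have hwd : w * (1 - Real.exp (-B)) = 1 - Real.exp (-(B * t)) := div_mul_cancel₀ _ hd.ne'
  have hw0 : 0 ≤ w :=
    div_nonneg (sub_nonneg.2 (Real.exp_le_one_iff.2 (neg_nonpos.2 (mul_nonneg hB.le ht0)))) hd.le
  have hw1 : w ≤ 1 := (div_le_one hd).2 <| sub_le_sub_left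
    (Real.exp_le_exp.2 (neg_le_neg (mul_le_of_le_one_right hB.le ht1))) 1
  have hconc := (Real.concaveOn_rpow (div_nonneg hb hB.le) ((div_le_one hB).2 hbB)).2
    (Set.mem_Ici.2 zero_le_one) (Set.mem_Ici.2 (Real.exp_nonneg (-B))) (sub_nonneg.2 hw1) hw0
    (by ring)
  have hcomb : (1 - w) • (1 : ℝ) + w • Real.exp (-B) = Real.exp (-(B * t)) := by
    simp only [smul_eq_mul]
    linarith
  beta_reduce at hconc
  rw [hcomb] at hconc
  simp only [← Real.exp_mul, Real.one_rpow, smul_eq_mul, mul_one] at hconc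
  rw [show -B * (b / B) = -b by field_simp, show -(B * t) * (b / B) = -(b * t) by field_simp]
    at hconc
  calc 1 - Real.exp (-(b * t)) ≤ w * (1 - Real.exp (-b)) := by linarith
    _ = _ := by rw [hw]; ring

theorem abs_log_sub_log_le {a b c : ℝ} (hc : 0 < c) (ha : c ≤ a) (hb : c ≤ b) :
    |Real.log a - Real.log b| ≤ |a - b| / c := by
  have key : ∀ {u v : ℝ}, c ≤ u → c ≤ v → Real.log u - Real.log v ≤ |u - v| / c := by
    intro u v hu hv
    have hu0 := hc.trans_le hu
    have hv0 := hc.trans_le hv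
    calc Real.log u - Real.log v = Real.log (u / v) := (Real.log_div hu0.ne' hv0.ne').symm
      _ ≤ u / v - 1 := Real.log_le_sub_one_of_pos (div_pos hu0 hv0)
      _ = (u - v) / v := by rw [sub_div, div_self hv0.ne']
      _ ≤ |u - v| / v := by gcongr; exact le_abs_self _
      _ ≤ |u - v| / c := by gcongr
  exact abs_sub_le_iff.2 ⟨key ha hb, abs_sub_comm a b ▸ key hb ha⟩

/-! ### Overlapping densities -/

section Integral

variable {Ω : Type*} [MeasurableSpace Ω] {μ : Measure Ω}

-- The overlap `κ v` of the two densities is matched with itself, at cost `c'`, and the remaining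
-- mass `1 - κ` is moved arbitrarily, at cost `c`.
theorem integral_mul_sub_integral_mul_le {u v φ ψ : Ω → ℝ} {κ c c' : ℝ}
    (huφ : Integrable (fun a => u a * φ a) μ) (hvψ : Integrable (fun a => v a * ψ a) μ)
    (hu : ∫ a, u a ∂μ = 1) (hv : ∫ a, v a ∂μ = 1) (hv0 : ∀ a, 0 ≤ v a) (hκ : 0 ≤ κ)
    (huv : ∀ a, κ * v a ≤ u a) (hc : ∀ a b, φ a ≤ ψ b + c) (hc' : ∀ a, φ a ≤ ψ a + c') :
    (∫ a, u a * φ a ∂μ) - ∫ a, v a * ψ a ∂μ ≤ (1 - κ) * c + κ * c' := by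
  have hui := integrable_of_integral_eq_one hu
  have hvi := integrable_of_integral_eq_one hv
  set m := ∫ a, v a * ψ a ∂μ with hm
  have hmean : ∀ a, φ a ≤ m + c := by
    intro a
    have : ∫ b, v b * (φ a - c) ∂μ ≤ m := integral_mono (hvi.mul_const _) hvψ fun b =>
      mul_le_mul_of_nonneg_left (sub_le_iff_le_add.2 (hc a b)) (hv0 b)
    rw [integral_mul_const, hv, one_mul] at this
    linarith
  have hpointwise : ∀ a, u a * φ a ≤
      (u a - κ * v a) * (m + c) + κ * (v a * ψ a + v a * c') := by
    intro a
    have hrest := mul_le_mul_of_nonneg_left (hmean a) (sub_nonneg.2 (huv a))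
    have hoverlap := mul_le_mul_of_nonneg_left (hc' a) (mul_nonneg hκ (hv0 a))
    linarith
  have hrest := (hui.sub (hvi.const_mul κ)).mul_const (m + c)
  have hoverlap := (hvψ.add (hvi.mul_const c')).const_mul κ
  have hle := integral_mono huφ (hrest.add hoverlap) hpointwise
  simp only [Pi.add_apply, Pi.sub_apply] at hle hrest hoverlap
  rw [integral_add hrest hoverlap, integral_mul_const, integral_sub hui (hvi.const_mul κ),
    integral_const_mul, integral_const_mul, integral_add hvψ (hvi.mul_const c'),
    integral_mul_const, hu, hv, ← hm] at hle
  linarith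

theorem abs_le_of_integral_eq_zero [IsProbabilityMeasure μ] {φ : Ω → ℝ} {c : ℝ}
    (hφ : Integrable φ μ) (h0 : ∫ x, φ x ∂μ = 0) (hc : ∀ x y, |φ x - φ y| ≤ c) (x : Ω) :
    |φ x| ≤ c := by
  have hmean : ∫ y, (φ x - φ y) ∂μ = φ x := by
    rw [integral_sub (integrable_const _) hφ, h0, integral_const, probReal_univ, one_smul, sub_zero]
  have hle := norm_integral_le_of_norm_le_const (f := fun y => φ x - φ y)
    (Eventually.of_forall (hc x) : ∀ᵐ y ∂μ, _)
  rwa [hmean, probReal_univ, mul_one] at hle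

end Integral

section SupNorm

omit [MetricSpace E] [MeasurableSpace E] [BorelSpace E]

variable {g : (ℕ → E) → ℝ}

theorem supNorm_nonneg (g : (ℕ → E) → ℝ) : 0 ≤ supNorm g :=
  Real.iSup_nonneg fun _ => abs_nonneg _

theorem Bdd.abs_le_supNorm (hg : Bdd g) (x : ℕ → E) : |g x| ≤ supNorm g :=
  le_ciSup (f := fun x => |g x|) (hg.imp fun _ hM => Set.forall_mem_range.2 hM) x

end SupNorm

section Holder

omit [MeasurableSpace E] [BorelSpace E]

/-! ### The metric on sequences -/

theorem summable_dX (x y : ℕ → E) :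
    Summable fun n : ℕ => ((1 : ℝ) / 2) ^ (n + 1) * min (dist (x n) (y n)) 1 :=
  Summable.of_nonneg_of_le (fun _ => by positivity)
    (fun _ => mul_le_of_le_one_right (by positivity) (min_le_right _ _))
    ((summable_nat_add_iff 1).2 summable_geometric_two)

theorem dX_nonneg (x y : ℕ → E) : 0 ≤ dX x y :=
  tsum_nonneg fun _ => by positivity

theorem dX_le_one (x y : ℕ → E) : dX x y ≤ 1 := by
  have hgeom : HasSum (fun n : ℕ => ((1 : ℝ) / 2) ^ (n + 1)) 1 := by
    simpa [pow_succ] using hasSum_geometric_two.mul_right ((1 : ℝ) / 2)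
  exact hasSum_le (fun _ => mul_le_of_le_one_right (by positivity) (min_le_right _ _))
    (summable_dX x y).hasSum hgeom

theorem dX_comm (x y : ℕ → E) : dX x y = dX y x := by
  simp only [dX, dist_comm]

theorem dX_eq_add_dX_shift (x y : ℕ → E) :
    dX x y = min (dist (x 0) (y 0)) 1 / 2 + dX (shift x) (shift y) / 2 := by
  rw [dX, (summable_dX x y).tsum_eq_zero_add, dX, ← tsum_div_const]
  congr 1
  · ring
  · exact tsum_congr fun n => by simp only [shift]; ring

theorem dX_cons (a : E) (x y : ℕ → E) : dX (cons a x) (cons a y) = dX x y / 2 := by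
  rw [dX_eq_add_dX_shift, show cons a x 0 = cons a y 0 from rfl, dist_self,
    min_eq_left zero_le_one, zero_div, zero_add]
  rfl

theorem dX_shift_le (x y : ℕ → E) : dX (shift x) (shift y) ≤ 2 * dX x y := by
  have hmin : 0 ≤ min (dist (x 0) (y 0)) 1 := by positivity
  linarith [dX_eq_add_dX_shift x y]

theorem dX_rpow_nonneg (α : ℝ) (x y : ℕ → E) : 0 ≤ dX x y ^ α :=
  Real.rpow_nonneg (dX_nonneg x y) α

theorem dX_rpow_le_one {α : ℝ} (hα : 0 ≤ α) (x y : ℕ → E) : dX x y ^ α ≤ 1 :=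
  Real.rpow_le_one (dX_nonneg x y) (dX_le_one x y) hα

theorem dX_cons_rpow (α : ℝ) (a : E) (x y : ℕ → E) :
    dX (cons a x) (cons a y) ^ α = (1 / 2 : ℝ) ^ α * dX x y ^ α := by
  rw [dX_cons, ← Real.mul_rpow (by norm_num) (dX_nonneg x y), one_div_mul_eq_div]

theorem continuous_cons_right (a : E) : Continuous fun x : ℕ → E => cons a x :=
  continuous_pi fun
    | 0 => continuous_const
    | n + 1 => continuous_apply n

/-! ### Bounded continuous and Hölder functions -/

variable {α : ℝ} {g k : (ℕ → E) → ℝ}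

theorem MemCb.sub_const (hg : MemCb g) (c : ℝ) : MemCb fun x => g x - c := by
  obtain ⟨hcont, M, hM⟩ := hg
  exact ⟨hcont.sub continuous_const, M + |c|, fun x => (abs_sub _ _).trans (by gcongr; exact hM x)⟩

theorem MemCb.mul (hg : MemCb g) (hk : MemCb k) : MemCb fun x => g x * k x := by
  obtain ⟨hgc, M, hM⟩ := hg
  obtain ⟨hkc, N, hN⟩ := hk
  refine ⟨hgc.mul hkc, M * N, fun x => ?_⟩
  rw [abs_mul]
  exact mul_le_mul (hM x) (hN x) (abs_nonneg _) ((abs_nonneg _).trans (hM x))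

theorem MemCb.exp (hg : MemCb g) : MemCb fun x => Real.exp (g x) := by
  obtain ⟨hcont, M, hM⟩ := hg
  refine ⟨hcont.rexp, Real.exp M, fun x => ?_⟩
  rw [Real.abs_exp]
  exact Real.exp_le_exp.2 ((le_abs_self _).trans (hM x))

theorem HolderConst.mono {C C' : ℝ} (hg : HolderConst α C g) (hC : C ≤ C') :
    HolderConst α C' g := fun x y =>
  (hg x y).trans (mul_le_mul_of_nonneg_right hC (dX_rpow_nonneg α x y))

theorem Dalpha_nonneg (α : ℝ) (g : (ℕ → E) → ℝ) : 0 ≤ Dalpha α g := by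
  refine Real.sSup_nonneg ?_
  rintro r ⟨x, y, -, rfl⟩
  exact div_nonneg (abs_nonneg _) (dX_rpow_nonneg α x y)

theorem HolderConst.div_le {C : ℝ} (hg : HolderConst α C g) (hC : 0 ≤ C) (x y : ℕ → E) :
    |g x - g y| / dX x y ^ α ≤ C :=
  div_le_of_le_mul₀ (dX_rpow_nonneg α x y) hC (hg x y)

theorem HolderConst.exp_neg_mul_exp_cons_le {A : ℝ} (hg : HolderConst α A g) (a : E)
    (x y : ℕ → E) :
    Real.exp (-(A * ((1 / 2) ^ α * dX x y ^ α))) * Real.exp (g (cons a y)) ≤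
      Real.exp (g (cons a x)) := by
  rw [← Real.exp_add, Real.exp_le_exp, ← dX_cons_rpow α a]
  linarith [(abs_le.1 (hg (cons a x) (cons a y))).1]

theorem HolderConst.Dalpha_le {C : ℝ} (hg : HolderConst α C g) (hC : 0 ≤ C) : Dalpha α g ≤ C := by
  refine Real.sSup_le ?_ hC
  rintro r ⟨x, y, -, rfl⟩
  exact hg.div_le hC x y

theorem HolderConst.holderConst_Dalpha {C : ℝ} (hg : HolderConst α C g) :
    HolderConst α (Dalpha α g) g := by
  intro x y
  rcases (dX_rpow_nonneg α x y).eq_or_lt with h0 | hpos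
  · simpa only [← h0, mul_zero] using hg x y
  rcases eq_or_ne x y with rfl | hxy
  · simpa using mul_nonneg (Dalpha_nonneg α g) hpos.le
  rw [← div_le_iff₀ hpos]
  refine le_csSup ⟨max C 0, ?_⟩ ⟨x, y, hxy, rfl⟩
  rintro r ⟨x, y, -, rfl⟩
  exact (hg.mono (le_max_left C 0)).div_le (le_max_right C 0) x y

theorem alphaNorm_nonneg (α : ℝ) (g : (ℕ → E) → ℝ) : 0 ≤ alphaNorm α g :=
  add_nonneg (supNorm_nonneg g) (Dalpha_nonneg α g)

theorem Dalpha_le_alphaNorm (α : ℝ) (g : (ℕ → E) → ℝ) : Dalpha α g ≤ alphaNorm α g :=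
  le_add_of_nonneg_left (supNorm_nonneg g)

theorem supNorm_le_alphaNorm (α : ℝ) (g : (ℕ → E) → ℝ) : supNorm g ≤ alphaNorm α g :=
  le_add_of_nonneg_right (Dalpha_nonneg α g)

theorem alphaNorm_le {M C : ℝ} (hM : 0 ≤ M) (hC : 0 ≤ C) (hgM : ∀ x, |g x| ≤ M)
    (hgC : HolderConst α C g) : alphaNorm α g ≤ M + C :=
  add_le_add (Real.iSup_le hgM hM) (hgC.Dalpha_le hC)

theorem MemHol.memCb (hg : MemHol α g) : MemCb g := ⟨hg.1, hg.2.1⟩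

theorem MemHol.holderConst_Dalpha (hg : MemHol α g) : HolderConst α (Dalpha α g) g :=
  let ⟨_, hC⟩ := hg.2.2
  hC.holderConst_Dalpha

theorem memHol_const (α c : ℝ) : MemHol α fun _ : ℕ → E => c :=
  ⟨continuous_const, ⟨|c|, fun _ => le_rfl⟩, 0, fun _ _ => by simp⟩

theorem MemHol.neg (hg : MemHol α g) : MemHol α fun x => -g x := by
  obtain ⟨hcont, ⟨M, hM⟩, C, hC⟩ := hg
  exact ⟨hcont.neg, ⟨M, fun x => (abs_neg (g x)).trans_le (hM x)⟩, C,
    fun x y => by rw [neg_sub_neg, abs_sub_comm]; exact hC x y⟩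

theorem MemHol.add (hg : MemHol α g) (hk : MemHol α k) : MemHol α fun x => g x + k x := by
  obtain ⟨hgc, ⟨M, hM⟩, C, hC⟩ := hg
  obtain ⟨hkc, ⟨N, hN⟩, D, hD⟩ := hk
  refine ⟨hgc.add hkc, ⟨M + N, fun x => (abs_add_le _ _).trans (add_le_add (hM x) (hN x))⟩,
    C + D, fun x y => ?_⟩
  rw [add_sub_add_comm, add_mul]
  exact (abs_add_le _ _).trans (add_le_add (hC x y) (hD x y))

theorem MemHol.sub (hg : MemHol α g) (hk : MemHol α k) : MemHol α fun x => g x - k x := by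
  simpa only [sub_eq_add_neg] using hg.add hk.neg

theorem MemHol.log (hg : MemHol α g) {c : ℝ} (hc : 0 < c) (hcg : ∀ x, c ≤ g x) :
    MemHol α fun x => Real.log (g x) := by
  obtain ⟨hcont, ⟨M, hM⟩, C, hC⟩ := hg
  refine ⟨hcont.log fun x => (hc.trans_le (hcg x)).ne',
    ⟨max |Real.log c| |Real.log M|, fun x => ?_⟩, C / c, fun x y => ?_⟩
  · exact abs_le_max_abs_abs (Real.log_le_log hc (hcg x))
      (Real.log_le_log (hc.trans_le (hcg x)) ((le_abs_self _).trans (hM x)))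
  · rw [div_mul_eq_mul_div]
    exact (abs_log_sub_log_le hc (hcg x) (hcg y)).trans (by gcongr; exact hC x y)

theorem MemHol.comp_shift (hg : MemHol α g) (hα : 0 ≤ α) : MemHol α fun x => g (shift x) := by
  have hD := hg.holderConst_Dalpha
  obtain ⟨hcont, ⟨M, hM⟩, -⟩ := hg
  refine ⟨hcont.comp continuous_shift, ⟨M, fun x => hM _⟩, Dalpha α g * 2 ^ α, fun x y => ?_⟩
  have hshift : dX (shift x) (shift y) ^ α ≤ 2 ^ α * dX x y ^ α := by
    rw [← Real.mul_rpow zero_le_two (dX_nonneg x y)]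
    exact Real.rpow_le_rpow (dX_nonneg _ _) (dX_shift_le x y) hα
  rw [mul_assoc]
  exact (hD _ _).trans (mul_le_mul_of_nonneg_left hshift (Dalpha_nonneg α g))

/-! ### An equivalent bounded Hölder seminorm -/

/-- `g` is Lipschitz with constant `c` for the bounded distance `1 - exp (-B d_X(x,y)^α)`. For
`0 < B` this is the Hölder condition with exponent `α`, up to a change of constant; `c` also bounds
the oscillation of `g`. -/
def ExpHolder (α B c : ℝ) (g : (ℕ → E) → ℝ) : Prop :=
  ∀ x y, |g x - g y| ≤ c * (1 - Real.exp (-(B * dX x y ^ α)))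

variable {B c : ℝ}

theorem ExpHolder.abs_sub_le (hg : ExpHolder α B c g) (hc : 0 ≤ c) (x y : ℕ → E) :
    |g x - g y| ≤ c :=
  (hg x y).trans (mul_le_of_le_one_right hc (one_sub_exp_neg_le_one _))

theorem ExpHolder.holderConst (hg : ExpHolder α B c g) (hc : 0 ≤ c) :
    HolderConst α (c * B) g := fun x y => by
  rw [mul_assoc]
  exact (hg x y).trans
    (mul_le_mul_of_nonneg_left (sub_le_comm.1 (Real.one_sub_le_exp_neg _)) hc)

theorem HolderConst.expHolder {C : ℝ} (hg : HolderConst α C g) (hα : 0 ≤ α) (hB : 0 < B)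
    (hC : 0 ≤ C) : ExpHolder α B (C / (1 - Real.exp (-B))) g := fun x y => by
  have hd := one_sub_exp_neg_pos hB
  calc |g x - g y| ≤ C * dX x y ^ α := hg x y
    _ = C / (1 - Real.exp (-B)) * (dX x y ^ α * (1 - Real.exp (-B))) := by field_simp
    _ ≤ C / (1 - Real.exp (-B)) * (1 - Real.exp (-(B * dX x y ^ α))) :=
      mul_le_mul_of_nonneg_left
        (mul_one_sub_exp_neg_le B (dX_rpow_nonneg α x y) (dX_rpow_le_one hα x y))
        (div_nonneg hC hd.le)

theorem ExpHolder.of_le {b : ℝ} (hg : ExpHolder α b c g) (hα : 0 ≤ α) (hc : 0 ≤ c) (hb : 0 ≤ b)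
    (hB : 0 < B) (hbB : b ≤ B) :
    ExpHolder α B ((1 - Real.exp (-b)) / (1 - Real.exp (-B)) * c) g := fun x y => by
  rw [mul_comm _ c, mul_assoc]
  exact (hg x y).trans <| mul_le_mul_of_nonneg_left
    (one_sub_exp_neg_mul_le hb hB hbB (dX_rpow_nonneg α x y) (dX_rpow_le_one hα x y)) hc

theorem ExpHolder.alphaNorm_le_of_integral_eq_zero [MeasurableSpace E] {μ : Measure (ℕ → E)}
    [IsProbabilityMeasure μ] (hg : ExpHolder α B c g) (hB : 0 ≤ B) (hc : 0 ≤ c)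
    (hgi : Integrable g μ) (hg0 : ∫ x, g x ∂μ = 0) : alphaNorm α g ≤ c + c * B :=
  alphaNorm_le hc (mul_nonneg hc hB)
    (abs_le_of_integral_eq_zero hgi hg0 (hg.abs_sub_le hc)) (hg.holderConst hc)

end Holder

/-! ### Ruelle operators of normalized potentials -/

section Markov

omit [MetricSpace E] [BorelSpace E]

variable {p : Measure E} {g φ : (ℕ → E) → ℝ}

theorem measurable_cons_left (x : ℕ → E) : Measurable fun a : E => cons a x :=
  measurable_pi_iff.2 fun
    | 0 => measurable_id
    | _ + 1 => measurable_const

theorem integral_exp_cons_eq_one (hg1 : ∀ x, ruelle p g (fun _ => 1) x = 1) (x : ℕ → E) :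
    ∫ a, Real.exp (g (cons a x)) ∂p = 1 := by
  simpa only [ruelle, mul_one] using hg1 x

theorem ruelle_const (hg1 : ∀ x, ruelle p g (fun _ => 1) x = 1) (c : ℝ) :
    ruelle p g (fun _ => c) = fun _ => c := by
  ext x
  rw [ruelle, integral_mul_const, integral_exp_cons_eq_one hg1, one_mul]

theorem abs_ruelle_le (hg1 : ∀ x, ruelle p g (fun _ => 1) x = 1) {M : ℝ} (hφ : ∀ x, |φ x| ≤ M)
    (x : ℕ → E) : |ruelle p g φ x| ≤ M := by
  have hint := integral_exp_cons_eq_one hg1 x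
  calc |ruelle p g φ x| ≤ ∫ a, Real.exp (g (cons a x)) * M ∂p :=
        norm_integral_le_of_norm_le (f := fun a => Real.exp (g (cons a x)) * φ (cons a x))
          ((integrable_of_integral_eq_one hint).mul_const M)
          (Eventually.of_forall fun a => by
            rw [norm_mul, Real.norm_eq_abs, Real.abs_exp]
            exact mul_le_mul_of_nonneg_left (hφ _) (Real.exp_nonneg _))
    _ = M := by rw [integral_mul_const, hint, one_mul]

end Markov

section Ruelle

omit [BorelSpace E]

variable {p : Measure E} {α B c : ℝ} {g φ : (ℕ → E) → ℝ}

theorem MemCb.integrable [OpensMeasurableSpace (ℕ → E)] (hφ : MemCb φ) (μ : Measure (ℕ → E))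
    [IsFiniteMeasure μ] : Integrable φ μ :=
  let ⟨hcont, M, hM⟩ := hφ
  Integrable.of_bound hcont.aestronglyMeasurable M (Eventually.of_forall hM)

theorem MemCb.integrable_comp_cons [OpensMeasurableSpace (ℕ → E)] [IsFiniteMeasure p]
    (hφ : MemCb φ) (x : ℕ → E) : Integrable (fun a => φ (cons a x)) p :=
  (hφ.integrable _).comp_measurable (measurable_cons_left x)

theorem MemCb.continuous_ruelle [OpensMeasurableSpace (ℕ → E)] [IsFiniteMeasure p]
    (hg : MemCb g) (hφ : MemCb φ) : Continuous (ruelle p g φ) := by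
  have hgφ := hg.exp.mul hφ
  obtain ⟨M, hM⟩ := hgφ.2
  exact continuous_of_dominated
    (fun x => (hgφ.integrable_comp_cons x).aestronglyMeasurable)
    (fun x => Eventually.of_forall fun a => hM (cons a x)) (integrable_const M)
    (Eventually.of_forall fun a => hgφ.1.comp (continuous_cons_right a))

theorem memCb_ruelle [OpensMeasurableSpace (ℕ → E)] [IsFiniteMeasure p] (hφ : MemCb φ)
    (hg : MemCb g) (hg1 : ∀ x, ruelle p g (fun _ => 1) x = 1) : MemCb (ruelle p g φ) :=
  ⟨hg.continuous_ruelle hφ, _, abs_ruelle_le hg1 hφ.2.abs_le_supNorm⟩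

theorem expHolder_ruelle [OpensMeasurableSpace (ℕ → E)] [IsFiniteMeasure p] {A : ℝ}
    (hφc : ExpHolder α B c φ) (hc : 0 ≤ c) (hφ : MemCb φ) (hg : MemCb g)
    (hgA : HolderConst α A g) (hg1 : ∀ x, ruelle p g (fun _ => 1) x = 1) :
    ExpHolder α ((1 / 2) ^ α * (A + B)) c (ruelle p g φ) := by
  suffices key : ∀ x y, ruelle p g φ x - ruelle p g φ y ≤
      c * (1 - Real.exp (-((1 / 2) ^ α * (A + B) * dX x y ^ α))) from
    fun x y => abs_sub_le_iff.2 ⟨key x y, dX_comm y x ▸ key y x⟩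
  intro x y
  set t := (1 / 2) ^ α * dX x y ^ α with ht
  have hcouple := integral_mul_sub_integral_mul_le (μ := p) (κ := Real.exp (-(A * t))) (c := c)
    (c' := c * (1 - Real.exp (-(B * t))))
    ((hg.exp.mul hφ).integrable_comp_cons x) ((hg.exp.mul hφ).integrable_comp_cons y)
    (integral_exp_cons_eq_one hg1 x) (integral_exp_cons_eq_one hg1 y)
    (fun _ => Real.exp_nonneg _) (Real.exp_nonneg _) (hgA.exp_neg_mul_exp_cons_le · x y)
    (fun _ _ => sub_le_iff_le_add'.1 ((le_abs_self _).trans (hφc.abs_sub_le hc _ _)))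
    (fun a => sub_le_iff_le_add'.1 ((le_abs_self _).trans
      ((hφc (cons a x) (cons a y)).trans_eq (by rw [dX_cons_rpow]))))
  calc _ ≤ (1 - Real.exp (-(A * t))) * c + Real.exp (-(A * t)) * (c * (1 - Real.exp (-(B * t)))) :=
        hcouple
    _ = c * (1 - Real.exp (-(A * t)) * Real.exp (-(B * t))) := by ring
    _ = c * (1 - Real.exp (-((1 / 2) ^ α * (A + B) * dX x y ^ α))) := by
      rw [← Real.exp_add, ht]
      ring_nf

theorem exists_expHolder_ruelle_contraction [OpensMeasurableSpace (ℕ → E)] [IsFiniteMeasure p]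
    (hα : 0 < α) (hg : MemHol α g) (hg1 : ∀ x, ruelle p g (fun _ => 1) x = 1) :
    ∃ B s : ℝ, 0 < B ∧ 0 < s ∧ s < 1 ∧ ∀ (c : ℝ) (φ : (ℕ → E) → ℝ), 0 ≤ c → MemCb φ →
      ExpHolder α B c φ → ExpHolder α B (s * c) (ruelle p g φ) := by
  set A := Dalpha α g
  set θ : ℝ := (1 / 2) ^ α
  have hA : 0 ≤ A := Dalpha_nonneg α g
  have hθ0 : 0 < θ := by positivity
  have hθ1 : 0 < 1 - θ := sub_pos.2 (Real.rpow_lt_one (by norm_num) (by norm_num) hα)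
  obtain ⟨B, hB⟩ : ∃ B, B * (1 - θ) = A + 1 := ⟨_, div_mul_cancel₀ _ hθ1.ne'⟩
  have hB0 : 0 < B := pos_of_mul_pos_left (by linarith) hθ1.le
  have hb0 : 0 < θ * (A + B) := by positivity
  have hbB : θ * (A + B) < B := by nlinarith
  refine ⟨B, (1 - Real.exp (-(θ * (A + B)))) / (1 - Real.exp (-B)), hB0,
    div_pos (one_sub_exp_neg_pos hb0) (one_sub_exp_neg_pos hB0), ?_, fun c φ hc hφ hφc => ?_⟩
  · rw [div_lt_one (one_sub_exp_neg_pos hB0)]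
    gcongr
  · have hLφ := expHolder_ruelle hφc hc hφ hg.memCb hg.holderConst_Dalpha hg1
    exact hLφ.of_le hα.le hc hb0.le hB0 hbB.le

theorem MemHol.holderConst_ruelle [OpensMeasurableSpace (ℕ → E)] [IsFiniteMeasure p]
    (hφ : MemHol α φ) (hα : 0 ≤ α) (hg : MemHol α g)
    (hg1 : ∀ x, ruelle p g (fun _ => 1) x = 1) :
    HolderConst α (Dalpha α φ / (1 - Real.exp (-1)) * ((1 / 2) ^ α * (Dalpha α g + 1)))
      (ruelle p g φ) := by
  have hc : 0 ≤ Dalpha α φ / (1 - Real.exp (-1)) :=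
    div_nonneg (Dalpha_nonneg α φ) (one_sub_exp_neg_pos one_pos).le
  have hφ1 := hφ.holderConst_Dalpha.expHolder hα one_pos (Dalpha_nonneg α φ)
  exact (expHolder_ruelle hφ1 hc hφ.memCb hg.memCb hg.holderConst_Dalpha hg1).holderConst hc

theorem memHol_ruelle [OpensMeasurableSpace (ℕ → E)] [IsFiniteMeasure p]
    (hφ : MemHol α φ) (hα : 0 ≤ α) (hg : MemHol α g)
    (hg1 : ∀ x, ruelle p g (fun _ => 1) x = 1) : MemHol α (ruelle p g φ) :=
  have ⟨hcont, hbdd⟩ := memCb_ruelle hφ.memCb hg.memCb hg1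
  ⟨hcont, hbdd, _, hφ.holderConst_ruelle hα hg hg1⟩

theorem exists_alphaNorm_ruelle_le [OpensMeasurableSpace (ℕ → E)] [IsFiniteMeasure p]
    (hα : 0 ≤ α) (hg : MemHol α g) (hg1 : ∀ x, ruelle p g (fun _ => 1) x = 1) :
    ∃ K : ℝ, 1 ≤ K ∧ ∀ φ : (ℕ → E) → ℝ, MemHol α φ →
      alphaNorm α (ruelle p g φ) ≤ K * alphaNorm α φ := by
  set R := (1 / 2) ^ α * (Dalpha α g + 1) / (1 - Real.exp (-1)) with hR
  have hR0 : 0 ≤ R := div_nonneg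
    (mul_nonneg (by positivity) (add_nonneg (Dalpha_nonneg α g) zero_le_one))
    (one_sub_exp_neg_pos one_pos).le
  refine ⟨1 + R, le_add_of_nonneg_right hR0, fun φ hφ => ?_⟩
  have hLφ : HolderConst α (R * Dalpha α φ) (ruelle p g φ) :=
    (hφ.holderConst_ruelle hα hg hg1).mono (by rw [hR]; exact (by ring : _ = _).le)
  calc alphaNorm α (ruelle p g φ) ≤ supNorm φ + R * Dalpha α φ :=
        alphaNorm_le (supNorm_nonneg φ) (mul_nonneg hR0 (Dalpha_nonneg α φ))
          (abs_ruelle_le hg1 hφ.2.1.abs_le_supNorm) hLφ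
    _ ≤ alphaNorm α φ + R * alphaNorm α φ :=
      add_le_add (supNorm_le_alphaNorm α φ)
        (mul_le_mul_of_nonneg_left (Dalpha_le_alphaNorm α φ) hR0)
    _ = (1 + R) * alphaNorm α φ := by ring

/-! ### Spectral gap for normalized potentials -/

theorem Bdd.alphaNorm_integral_le {μ : Measure (ℕ → E)} [IsProbabilityMeasure μ]
    (hφ : Bdd φ) (α : ℝ) : alphaNorm α (fun _ : ℕ → E => ∫ x, φ x ∂μ) ≤ alphaNorm α φ := by
  have hmean : |∫ x, φ x ∂μ| ≤ supNorm φ := by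
    simpa using norm_integral_le_of_norm_le_const (f := φ)
      (Eventually.of_forall hφ.abs_le_supNorm : ∀ᵐ x ∂μ, _)
  calc alphaNorm α (fun _ : ℕ → E => ∫ x, φ x ∂μ) ≤ supNorm φ + 0 :=
        alphaNorm_le (supNorm_nonneg φ) le_rfl (fun _ => hmean) fun _ _ => by simp
    _ ≤ alphaNorm α φ := add_le_add_right (Dalpha_nonneg α φ) _

/-- The operator `L_g - μ`, where `μ φ` is regarded as a constant function; for the normalized
potential and the equilibrium state defined below it is `Q - Π`. -/
def centeredRuelle (p : Measure E) (g : (ℕ → E) → ℝ) (μ : Measure (ℕ → E))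
    (φ : (ℕ → E) → ℝ) : (ℕ → E) → ℝ :=
  fun x => ruelle p g φ x - ∫ y, φ y ∂μ

variable {μ : Measure (ℕ → E)}

theorem memCb_centeredRuelle [OpensMeasurableSpace (ℕ → E)] [IsFiniteMeasure p] (hφ : MemCb φ)
    (hg : MemCb g) (hg1 : ∀ x, ruelle p g (fun _ => 1) x = 1) :
    MemCb (centeredRuelle p g μ φ) :=
  (memCb_ruelle hφ hg hg1).sub_const _

theorem MemCb.iterate_centeredRuelle [OpensMeasurableSpace (ℕ → E)] [IsFiniteMeasure p]
    (hφ : MemCb φ) (hg : MemCb g) (hg1 : ∀ x, ruelle p g (fun _ => 1) x = 1) (n : ℕ) :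
    MemCb ((centeredRuelle p g μ)^[n] φ) :=
  Function.Iterate.rec MemCb hφ (fun _ hψ => memCb_centeredRuelle hψ hg hg1) n

theorem integral_centeredRuelle_eq_zero [OpensMeasurableSpace (ℕ → E)] [IsFiniteMeasure p]
    [IsProbabilityMeasure μ] (hg : MemCb g) (hg1 : ∀ x, ruelle p g (fun _ => 1) x = 1)
    (hφ : MemCb φ) (hinv : ∫ x, ruelle p g φ x ∂μ = ∫ x, φ x ∂μ) :
    ∫ x, centeredRuelle p g μ φ x ∂μ = 0 := by
  simp only [centeredRuelle]
  rw [integral_sub ((memCb_ruelle hφ hg hg1).integrable μ) (integrable_const _), hinv,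
    integral_const, probReal_univ, one_smul, sub_self]

theorem ExpHolder.iterate_centeredRuelle [OpensMeasurableSpace (ℕ → E)] [IsFiniteMeasure p]
    {s : ℝ} (hg : MemCb g) (hg1 : ∀ x, ruelle p g (fun _ => 1) x = 1) (hs : 0 ≤ s)
    (hcontr : ∀ (c : ℝ) (φ : (ℕ → E) → ℝ), 0 ≤ c → MemCb φ → ExpHolder α B c φ →
      ExpHolder α B (s * c) (ruelle p g φ))
    (hφc : ExpHolder α B c φ) (hc : 0 ≤ c) (hφ : MemCb φ) (n : ℕ) :
    ExpHolder α B (s ^ n * c) ((centeredRuelle p g μ)^[n] φ) := by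
  induction n with
  | zero => rwa [pow_zero, one_mul]
  | succ n ih =>
    intro x y
    rw [Function.iterate_succ_apply', pow_succ', mul_assoc s]
    simpa only [centeredRuelle, sub_sub_sub_cancel_right] using
      hcontr _ _ (mul_nonneg (pow_nonneg hs n) hc) (hφ.iterate_centeredRuelle hg hg1 n) ih x y

theorem exists_alphaNorm_iterate_centeredRuelle_le [OpensMeasurableSpace (ℕ → E)]
    [IsFiniteMeasure p] [IsProbabilityMeasure μ] (hα : 0 < α) (hg : MemHol α g)
    (hg1 : ∀ x, ruelle p g (fun _ => 1) x = 1)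
    (hinv : ∀ φ, MemCb φ → ∫ x, ruelle p g φ x ∂μ = ∫ x, φ x ∂μ) :
    ∃ C s : ℝ, 0 < C ∧ 0 < s ∧ s < 1 ∧ ∀ φ : (ℕ → E) → ℝ, MemHol α φ → ∀ n : ℕ,
      alphaNorm α ((centeredRuelle p g μ)^[n] φ) ≤ C * s ^ n * alphaNorm α φ := by
  obtain ⟨B, s, hB, hs0, hs1, hcontr⟩ := exists_expHolder_ruelle_contraction hα hg hg1
  have hd := one_sub_exp_neg_pos hB
  set R := (1 + B) / (1 - Real.exp (-B)) with hR
  have hR0 : 0 ≤ R := div_nonneg (by positivity) hd.le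
  refine ⟨1 + R, s, by positivity, hs0, hs1, fun φ hφ n => ?_⟩
  have hφ0 := alphaNorm_nonneg α φ
  rcases n with _ | n
  · rw [pow_zero, mul_one]
    exact le_mul_of_one_le_left hφ0 (le_add_of_nonneg_right hR0)
  have hc : 0 ≤ Dalpha α φ / (1 - Real.exp (-B)) := div_nonneg (Dalpha_nonneg α φ) hd.le
  have hψc := (hφ.holderConst_Dalpha.expHolder hα.le hB (Dalpha_nonneg α φ)).iterate_centeredRuelle
    (μ := μ) hg.memCb hg1 hs0.le hcontr hc hφ.memCb (n + 1)
  have hψ0 : ∫ x, (centeredRuelle p g μ)^[n + 1] φ x ∂μ = 0 := by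
    have hn : MemCb ((centeredRuelle p g μ)^[n] φ) :=
      hφ.memCb.iterate_centeredRuelle hg.memCb hg1 n
    rw [Function.iterate_succ_apply']
    exact integral_centeredRuelle_eq_zero hg.memCb hg1 hn (hinv _ hn)
  calc alphaNorm α ((centeredRuelle p g μ)^[n + 1] φ)
      ≤ s ^ (n + 1) * (Dalpha α φ / (1 - Real.exp (-B))) +
          s ^ (n + 1) * (Dalpha α φ / (1 - Real.exp (-B))) * B :=
        hψc.alphaNorm_le_of_integral_eq_zero hB.le (mul_nonneg (pow_nonneg hs0.le _) hc)
          ((hφ.memCb.iterate_centeredRuelle hg.memCb hg1 (n + 1)).integrable μ) hψ0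
    _ = R * s ^ (n + 1) * Dalpha α φ := by rw [hR]; ring
    _ ≤ (1 + R) * s ^ (n + 1) * alphaNorm α φ := by
      gcongr
      · exact Dalpha_nonneg α φ
      · exact le_add_of_nonneg_left zero_le_one
      · exact Dalpha_le_alphaNorm α φ

end Ruelle

/-! ### Normalizing a potential by its eigenfunction -/

section Normalization

variable {p : Measure E} {ν : Measure (ℕ → E)} {α c lam : ℝ} {f h φ : (ℕ → E) → ℝ}

/-- The normalized potential `f + log h - log (h ∘ σ) - log λ`, cohomologous to `f - log λ`, whose
Ruelle operator is `Q`. -/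
def normalizedPotential (f h : (ℕ → E) → ℝ) (lam : ℝ) : (ℕ → E) → ℝ :=
  fun x => f x + Real.log (h x) - Real.log (h (shift x)) - Real.log lam

/-- The equilibrium state `h ν`, against which `Π` integrates. The density is cut off at `0` where
`h` is negative. -/
def equilibriumState (ν : Measure (ℕ → E)) (h : (ℕ → E) → ℝ) : Measure (ℕ → E) :=
  ν.withDensity fun x => ENNReal.ofReal (h x)

omit [MeasurableSpace E] [BorelSpace E] in
theorem memHol_normalizedPotential (hf : MemHol α f) (hα : 0 ≤ α) (hh : MemHol α h) (hc : 0 < c)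
    (hch : ∀ x, c ≤ h x) (lam : ℝ) : MemHol α (normalizedPotential f h lam) :=
  have hlog := hh.log hc hch
  ((hf.add hlog).sub (hlog.comp_shift hα)).sub (memHol_const α _)

omit [MetricSpace E] [BorelSpace E]

omit [MeasurableSpace E] in
theorem exp_normalizedPotential_cons (hlam : 0 < lam) (hh : ∀ x, 0 < h x) (a : E) (x : ℕ → E) :
    Real.exp (normalizedPotential f h lam (cons a x)) =
      Real.exp (f (cons a x)) * h (cons a x) / (lam * h x) := by
  rw [normalizedPotential, show shift (cons a x) = x from rfl, Real.exp_sub, Real.exp_sub,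
    Real.exp_add, Real.exp_log (hh _), Real.exp_log (hh _), Real.exp_log hlam, div_div,
    mul_comm lam]

theorem Qop_eq_ruelle_normalizedPotential (hlam : 0 < lam) (hh : ∀ x, 0 < h x) :
    Qop p f h lam = ruelle p (normalizedPotential f h lam) := by
  ext φ x
  rw [Qop, ruelle, ruelle, ← integral_div]
  congr 1 with a
  rw [exp_normalizedPotential_cons hlam hh]
  ring

theorem ruelle_normalizedPotential_one (hlam : 0 < lam) (hh : ∀ x, 0 < h x)
    (heig : ∀ x, ruelle p f h x = lam * h x) (x : ℕ → E) :
    ruelle p (normalizedPotential f h lam) (fun _ => 1) x = 1 := by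
  simp only [← Qop_eq_ruelle_normalizedPotential hlam hh, Qop, mul_one, heig x,
    div_self (mul_pos hlam (hh x)).ne']

theorem integral_equilibriumState (hm : Measurable h) (hh : ∀ x, 0 ≤ h x) (φ : (ℕ → E) → ℝ) :
    ∫ x, φ x ∂equilibriumState ν h = ∫ x, φ x * h x ∂ν := by
  rw [equilibriumState, integral_withDensity_eq_integral_toReal_smul hm.ennreal_ofReal
    (Eventually.of_forall fun _ => ENNReal.ofReal_lt_top)]
  simp only [ENNReal.toReal_ofReal (hh _), smul_eq_mul, mul_comm]

theorem Piop_eq_integral_equilibriumState (hm : Measurable h) (hh : ∀ x, 0 ≤ h x) :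
    Piop ν h = fun φ _ => ∫ x, φ x ∂equilibriumState ν h :=
  funext₂ fun φ _ => (integral_equilibriumState hm hh φ).symm

theorem QminusPi_eq_centeredRuelle (hm : Measurable h) (hlam : 0 < lam) (hh : ∀ x, 0 < h x) :
    QminusPi p f h lam ν =
      centeredRuelle p (normalizedPotential f h lam) (equilibriumState ν h) := by
  ext φ x
  rw [QminusPi, Qop_eq_ruelle_normalizedPotential hlam hh,
    Piop_eq_integral_equilibriumState hm fun x => (hh x).le, centeredRuelle]

theorem isProbabilityMeasure_equilibriumState (hh : ∀ x, 0 ≤ h x) (hnorm : ∫ x, h x ∂ν = 1) :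
    IsProbabilityMeasure (equilibriumState ν h) := by
  refine ⟨?_⟩
  rw [equilibriumState, withDensity_apply _ MeasurableSet.univ, Measure.restrict_univ,
    ← ofReal_integral_eq_lintegral_ofReal (integrable_of_integral_eq_one hnorm)
    (Eventually.of_forall hh), hnorm, ENNReal.ofReal_one]

theorem integral_ruelle_equilibriumState (hm : Measurable h) (hlam : 0 < lam) (hh : ∀ x, 0 < h x)
    (hconf : ∫ x, ruelle p f (fun y => h y * φ y) x ∂ν = lam * ∫ x, h x * φ x ∂ν) :
    ∫ x, ruelle p (normalizedPotential f h lam) φ x ∂equilibriumState ν h =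
      ∫ x, φ x ∂equilibriumState ν h := by
  have hQ (x : ℕ → E) : Qop p f h lam φ x * h x = ruelle p f (fun y => h y * φ y) x / lam := by
    rw [Qop]
    field_simp [(hh x).ne']
  rw [integral_equilibriumState hm fun x => (hh x).le,
    integral_equilibriumState hm fun x => (hh x).le, ← Qop_eq_ruelle_normalizedPotential hlam hh]
  simp only [hQ, integral_div]
  rw [hconf, mul_div_cancel_left₀ _ hlam.ne']
  simp only [mul_comm (h _)]

end Normalization

/-! ### Quasi-compactness -/

theorem statement10_general {E : Type*} [MetricSpace E] [MeasurableSpace E]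
    [OpensMeasurableSpace (ℕ → E)] (p : Measure E) [IsFiniteMeasure p] (α : ℝ) (hα0 : 0 < α)
    (f : (ℕ → E) → ℝ) (hf : MemHol α f) (ν : Measure (ℕ → E)) (lam : ℝ) (hlam : 0 < lam)
    (hconf : ∀ φ : (ℕ → E) → ℝ, MemCb φ →
      (∫ x, ruelle p f φ x ∂ν) = lam * ∫ x, φ x ∂ν)
    (h : (ℕ → E) → ℝ) (hh : MemHol α h) (hbd : ∃ c : ℝ, 0 < c ∧ ∀ x, c ≤ h x)
    (heig : ∀ x, ruelle p f h x = lam * h x) (hnorm : (∫ x, h x ∂ν) = 1) :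
    (∃ K : ℝ, 0 < K ∧ ∀ φ : (ℕ → E) → ℝ, MemHol α φ →
      MemHol α (Qop p f h lam φ) ∧ MemHol α (Piop ν h φ) ∧
      alphaNorm α (Qop p f h lam φ) ≤ K * alphaNorm α φ ∧
      alphaNorm α (Piop ν h φ) ≤ K * alphaNorm α φ) ∧
    (∀ φ : (ℕ → E) → ℝ, MemHol α φ →
      Piop ν h (Qop p f h lam φ) = Piop ν h φ ∧
      Qop p f h lam (Piop ν h φ) = Piop ν h φ) ∧
    (∀ c : ℝ, Qop p f h lam (fun _ => c) = (fun _ => c) ∧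
      Piop ν h (fun _ => c) = (fun _ => c)) ∧
    ∃ C s : ℝ, 0 < C ∧ 0 < s ∧ s < 1 ∧
      ∀ φ : (ℕ → E) → ℝ, MemHol α φ → ∀ n : ℕ,
        alphaNorm α ((QminusPi p f h lam ν)^[n] φ) ≤ C * s ^ n * alphaNorm α φ := by
  obtain ⟨c, hc, hch⟩ := hbd
  have hpos (x : ℕ → E) : 0 < h x := hc.trans_le (hch x)
  have hm : Measurable h := hh.1.measurable
  set g := normalizedPotential f h lam
  set μ := equilibriumState ν h
  have hg : MemHol α g := memHol_normalizedPotential hf hα0.le hh hc hch lam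
  have hg1 : ∀ x, ruelle p g (fun _ => 1) x = 1 := ruelle_normalizedPotential_one hlam hpos heig
  have hμ : IsProbabilityMeasure μ :=
    isProbabilityMeasure_equilibriumState (fun x => (hpos x).le) hnorm
  have hinv (φ : (ℕ → E) → ℝ) (hφ : MemCb φ) : ∫ x, ruelle p g φ x ∂μ = ∫ x, φ x ∂μ :=
    integral_ruelle_equilibriumState hm hlam hpos (hconf _ (hh.memCb.mul hφ))
  rw [Qop_eq_ruelle_normalizedPotential hlam hpos, QminusPi_eq_centeredRuelle hm hlam hpos,
    Piop_eq_integral_equilibriumState hm fun x => (hpos x).le]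
  obtain ⟨K, hK1, hK⟩ := exists_alphaNorm_ruelle_le hα0.le hg hg1
  refine ⟨⟨K, one_pos.trans_le hK1, fun φ hφ => ⟨memHol_ruelle hφ hα0.le hg hg1, memHol_const α _,
    hK φ hφ, ?_⟩⟩, fun φ hφ => ⟨funext fun _ => hinv φ hφ.memCb, ruelle_const hg1 _⟩,
    fun r => ⟨ruelle_const hg1 r, funext fun _ => ?_⟩,
    exists_alphaNorm_iterate_centeredRuelle_le hα0 hg hg1 hinv⟩
  · exact (hφ.2.1.alphaNorm_integral_le α).trans
      (le_mul_of_one_le_left (alphaNorm_nonneg α φ) hK1)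
  · simp only [integral_const, probReal_univ, one_smul]

/-- Quasi-compactness of the normalized operator: `Q` and `Π` are
bounded operators on `Hol(α)`, `Π ∘ Q = Q ∘ Π = Π`, both fix constant functions, and
`‖(Q − Π)ⁿ(φ)‖_α ≤ C sⁿ ‖φ‖_α`. -/
theorem statement10 {E : Type*} [MetricSpace E] [CompleteSpace E]
    [TopologicalSpace.SeparableSpace E] [MeasurableSpace E] [BorelSpace E] [Nonempty E]
    (p : Measure E) [IsProbabilityMeasure p]
    (α : ℝ) (hα0 : 0 < α) (hα1 : α < 1)
    (f : (ℕ → E) → ℝ) (hf : MemHol α f)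
    (ν : Measure (ℕ → E)) (hν : IsProbabilityMeasure ν) (lam : ℝ) (hlam : 0 < lam)
    (hconf : ∀ φ : (ℕ → E) → ℝ, MemCb φ →
      (∫ x, ruelle p f φ x ∂ν) = lam * ∫ x, φ x ∂ν)
    (h : (ℕ → E) → ℝ) (hh : MemHol α h)
    (hbd : ∃ c C : ℝ, 0 < c ∧ (∀ x, c ≤ h x) ∧ ∀ x, h x ≤ C)
    (heig : ∀ x, ruelle p f h x = lam * h x)
    (hnorm : (∫ x, h x ∂ν) = 1) :
    (∃ K : ℝ, 0 < K ∧ ∀ φ : (ℕ → E) → ℝ, MemHol α φ →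
      MemHol α (Qop p f h lam φ) ∧ MemHol α (Piop ν h φ) ∧
      alphaNorm α (Qop p f h lam φ) ≤ K * alphaNorm α φ ∧
      alphaNorm α (Piop ν h φ) ≤ K * alphaNorm α φ) ∧
    (∀ φ : (ℕ → E) → ℝ, MemHol α φ →
      Piop ν h (Qop p f h lam φ) = Piop ν h φ ∧
      Qop p f h lam (Piop ν h φ) = Piop ν h φ) ∧
    (∀ c : ℝ, Qop p f h lam (fun _ => c) = (fun _ => c) ∧
      Piop ν h (fun _ => c) = (fun _ => c)) ∧
    ∃ C s : ℝ, 0 < C ∧ 0 < s ∧ s < 1 ∧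
      ∀ φ : (ℕ → E) → ℝ, MemHol α φ → ∀ n : ℕ,
        alphaNorm α ((QminusPi p f h lam ν)^[n] φ) ≤ C * s ^ n * alphaNorm α φ := by
  have : SecondCountableTopology E := UniformSpace.secondCountable_of_separable E
  obtain ⟨c, -, hc, hch, -⟩ := hbd
  exact statement10_general p α hα0 f hf ν lam hlam hconf h hh ⟨c, hc, hch⟩ heig hnorm

end
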